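/- arXiv:1910.14439 — 4 statements merged into one kernel-verified Lean document; each statement's English description precedes it below -/
import Mathlib

section
/- Domination of ground states: for θ∈{+,per} and L=L_c=⌊e^{β/2}⌋, the Gibbs measure of the set of ground states satisfies π(𝒢) ≥ 1 − C·e^{-2β} for some constant C and all β sufficiently large, where 𝒢 is the set of configurations minimizing the Hamiltonian H^θ. -/
open scoped BigOperators

attribute [local instance] Classical.propDecidable

noncomputable section

namespace SPM

/-- Spin configurations on the box `[1:L]²`; `true` codes spin `+1`. -/
abbrev Config (L : ℕ) := Fin L × Fin L → Bool

/-- The spin at the integer point `y ∈ ℤ²`, with all-plus boundary conditions: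
sites outside `[1:L]²` carry spin `+1`. Site `i : Fin L × Fin L` sits at `(i₁+1, i₂+1)`. -/
def spinAt (L : ℕ) (σ : Config L) (y : ℤ × ℤ) : ℝ :=
  if ∃ i : Fin L × Fin L, ((i.1 : ℤ) + 1, (i.2 : ℤ) + 1) = y ∧ σ i = false then -1 else 1

/-- The plaquette variable `p_x(σ) = ∏_{y ∈ B_x} σ_y`. -/
def plaq (L : ℕ) (σ : Config L) (x : ℤ × ℤ) : ℝ :=
  spinAt L σ x * spinAt L σ (x.1 + 1, x.2) * spinAt L σ (x.1, x.2 + 1) *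
    spinAt L σ (x.1 + 1, x.2 + 1)

/-- The plaquettes meeting the box `[1:L]²` are indexed by `[0:L]²`. -/
def plaqSet (L : ℕ) : Finset (ℤ × ℤ) :=
  Finset.Icc (0 : ℤ) (L : ℤ) ×ˢ Finset.Icc (0 : ℤ) (L : ℤ)

/-- The set of defects `D(σ)`. -/
def defects (L : ℕ) (σ : Config L) : Finset (ℤ × ℤ) :=
  (plaqSet L).filter fun x => plaq L σ x = -1

/-- The Hamiltonian `H(σ) = -(1/2) ∑_x p_x(σ)`. -/
def ham (L : ℕ) (σ : Config L) : ℝ := -(1 / 2) * ∑ x ∈ plaqSet L, plaq L σ x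

/-- The Gibbs measure `π(σ) = e^{-βH(σ)}/Z`. -/
def gibbs (L : ℕ) (β : ℝ) (σ : Config L) : ℝ :=
  Real.exp (-β * ham L σ) / ∑ η : Config L, Real.exp (-β * ham L η)

/-- Flip one spin. -/
def flip (L : ℕ) (σ : Config L) (x : Fin L × Fin L) : Config L :=
  fun i => if i = x then !(σ i) else σ i

/-- Metropolis rate of the move `σ → η`: `min(1, e^{-β(H(η)-H(σ))})`. -/
def metroRate (L : ℕ) (β : ℝ) (σ η : Config L) : ℝ :=
  min 1 (Real.exp (-β * (ham L η - ham L σ)))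

/-- The Glauber generator, as a matrix. -/
def gen (L : ℕ) (β : ℝ) : Matrix (Config L) (Config L) ℝ :=
  fun σ η =>
    if η = σ then -(∑ x : Fin L × Fin L, metroRate L β σ (flip L σ x))
    else ∑ x : Fin L × Fin L, if η = flip L σ x then metroRate L β σ (flip L σ x) else 0

/-- Entrywise matrix exponential `∑ₖ Aᵏ/k!`. -/
def mexp {n : Type*} [Fintype n] [DecidableEq n] (A : Matrix n n ℝ) : Matrix n n ℝ :=
  fun i j => ∑' k : ℕ, (A ^ k) i j / (Nat.factorial k : ℝ)

/-- Total-variation distance between two (probability) vectors. -/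
def tv {n : Type*} [Fintype n] (μ ν : n → ℝ) : ℝ := (∑ s, |μ s - ν s|) / 2

/-- The `ε`-mixing time of the Glauber dynamics. -/
def tmix (L : ℕ) (β ε : ℝ) : ℝ :=
  sInf {t : ℝ | 0 < t ∧ ∀ σ : Config L, tv (mexp (t • gen L β) σ) (gibbs L β) < ε}

/-- The critical length scale `L_c = ⌊e^{β/2}⌋`. -/
def Lc (β : ℝ) : ℕ := ⌊Real.exp (β / 2)⌋₊

end SPM


namespace SPMP

/-- Spin configurations on the `L × L` torus; `true` codes spin `+1`. -/
abbrev ConfigP (L : ℕ) := Fin L × Fin L → Bool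

/-- The real spin value of a Boolean spin. -/
def sval (b : Bool) : ℝ := if b then 1 else -1

/-- Cyclic successor on `Fin L`. -/
def fsucc {L : ℕ} (i : Fin L) : Fin L := ⟨(i.val + 1) % L, Nat.mod_lt _ i.pos⟩

/-- The periodic plaquette variable
`p_x(σ) = σ_{(x₁,x₂)} σ_{(x₁+1,x₂)} σ_{(x₁,x₂+1)} σ_{(x₁+1,x₂+1)}` (coordinates mod `L`). -/
def plaqP (L : ℕ) (σ : ConfigP L) (x : Fin L × Fin L) : ℝ :=
  sval (σ x) * sval (σ (fsucc x.1, x.2)) * sval (σ (x.1, fsucc x.2)) *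
    sval (σ (fsucc x.1, fsucc x.2))

/-- The periodic Hamiltonian `H(σ) = -(1/2) ∑_x p_x(σ)`. -/
def hamP (L : ℕ) (σ : ConfigP L) : ℝ := -(1 / 2) * ∑ x : Fin L × Fin L, plaqP L σ x

/-- The Gibbs measure `π(σ) = e^{-βH(σ)}/Z`. -/
def gibbsP (L : ℕ) (β : ℝ) (σ : ConfigP L) : ℝ :=
  Real.exp (-β * hamP L σ) / ∑ η : ConfigP L, Real.exp (-β * hamP L η)

/-- Flip one spin. -/
def flipP (L : ℕ) (σ : ConfigP L) (x : Fin L × Fin L) : ConfigP L :=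
  fun i => if i = x then !(σ i) else σ i

/-- Metropolis rate of the move `σ → η`: `min(1, e^{-β(H(η)-H(σ))})`. -/
def metroRateP (L : ℕ) (β : ℝ) (σ η : ConfigP L) : ℝ :=
  min 1 (Real.exp (-β * (hamP L η - hamP L σ)))

/-- The Glauber generator of the periodic dynamics, as a matrix. -/
def genP (L : ℕ) (β : ℝ) : Matrix (ConfigP L) (ConfigP L) ℝ :=
  fun σ η =>
    if η = σ then -(∑ x : Fin L × Fin L, metroRateP L β σ (flipP L σ x))
    else ∑ x : Fin L × Fin L, if η = flipP L σ x then metroRateP L β σ (flipP L σ x) else 0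

/-- Entrywise matrix exponential `∑ₖ Aᵏ/k!`. -/
def mexp {n : Type*} [Fintype n] [DecidableEq n] (A : Matrix n n ℝ) : Matrix n n ℝ :=
  fun i j => ∑' k : ℕ, (A ^ k) i j / (Nat.factorial k : ℝ)

/-- Total-variation distance between two (probability) vectors. -/
def tv {n : Type*} [Fintype n] (μ ν : n → ℝ) : ℝ := (∑ s, |μ s - ν s|) / 2

/-- The `ε`-mixing time of the periodic Glauber dynamics. -/
def tmixP (L : ℕ) (β ε : ℝ) : ℝ :=
  sInf {t : ℝ | 0 < t ∧ ∀ σ : ConfigP L, tv (mexp (t • genP L β) σ) (gibbsP L β) < ε}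

/-- The set of ground states: minimizers of the Hamiltonian. -/
def GroundP (L : ℕ) : Set (ConfigP L) := {σ | ∀ η : ConfigP L, hamP L σ ≤ hamP L η}

/-- The critical length scale `L_c = ⌊e^{β/2}⌋`. -/
def Lc (β : ℝ) : ℕ := ⌊Real.exp (β / 2)⌋₊

end SPMP

namespace SPM

/-- Ground states of the all-plus model: minimizers of the Hamiltonian. -/
def Ground (L : ℕ) : Set (Config L) := {σ | ∀ η : Config L, ham L σ ≤ ham L η}

end SPM

open SPM SPMP

/-- A quadratic lower bound for the hyperbolic cosine. -/
lemma one_add_half_sq_le_cosh (x : ℝ) : 1 + x ^ 2 / 2 ≤ Real.cosh x := by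
  have habs : |x| / 2 ≤ Real.sinh (|x| / 2) := Real.self_le_sinh_iff.2 (by positivity)
  have hdouble : Real.cosh |x| = 1 + 2 * Real.sinh (|x| / 2) ^ 2 := by
    have h := Real.cosh_two_mul (|x| / 2)
    rw [Real.cosh_sq, mul_div_cancel₀ _ (two_ne_zero' ℝ)] at h
    linarith
  rw [← Real.cosh_abs, hdouble, ← sq_abs x]
  have := mul_self_le_mul_self (by positivity) habs
  nlinarith

/-- Sub-Gaussian bound: for a sum `S` of `N` independent uniform signs,
`E exp (a S²) ≤ (1 - 2 N a) ^ (-1/2)`. -/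
lemma sum_exp_mul_sq_le (N : ℕ) : ∀ a : ℝ, 0 ≤ a → 2 * N * a < 1 →
    ∑ s : Fin N → Bool, Real.exp (a * (∑ i, sval (s i)) ^ 2) ≤ 2 ^ N / √(1 - 2 * N * a) := by
  induction N with
  | zero => intro a _ _; simp
  | succ n ih =>
    intro a ha hN
    push_cast at hN
    have hna : 0 ≤ n * a := by positivity
    have hexp : Real.exp (2 * a) ≤ 1 + 2 * a + (2 * a) ^ 2 := by
      have h := Real.abs_exp_sub_one_sub_id_le (x := 2 * a) (by rw [abs_of_nonneg] <;> linarith)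
      linarith [(abs_le.1 h).2]
    have hkey : Real.exp (2 * a) * (1 - 2 * (n + 1) * a) ≤ 1 - 2 * n * (a + 2 * a ^ 2) := by
      refine (mul_le_mul_of_nonneg_right hexp (by linarith)).trans ?_
      have : 0 ≤ (n * a) * a ^ 2 := by positivity
      have : 0 ≤ a ^ 3 := by positivity
      nlinarith
    have hpos : 0 < Real.exp (2 * a) * (1 - 2 * (n + 1) * a) :=
      mul_pos (Real.exp_pos _) (by linarith)
    have hstep : ∀ S : ℝ, Real.exp (a * (1 + S) ^ 2) + Real.exp (a * (-1 + S) ^ 2) ≤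
        2 * Real.exp a * Real.exp ((a + 2 * a ^ 2) * S ^ 2) := by
      intro S
      have h1 : Real.exp (a * (1 + S) ^ 2) + Real.exp (a * (-1 + S) ^ 2) =
          2 * Real.exp a * (Real.exp (a * S ^ 2) * Real.cosh (2 * a * S)) := by
        rw [Real.cosh_eq, show a * (1 + S) ^ 2 = a + a * S ^ 2 + 2 * a * S by ring,
          show a * (-1 + S) ^ 2 = a + a * S ^ 2 + -(2 * a * S) by ring]
        simp only [Real.exp_add]
        ring
      rw [h1]
      refine mul_le_mul_of_nonneg_left ?_ (by positivity)
      refine (mul_le_mul_of_nonneg_left (Real.cosh_le_exp_half_sq _) (by positivity)).trans ?_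
      rw [← Real.exp_add]
      exact (congrArg Real.exp (by ring)).le
    have hsplit : ∑ s : Fin (n + 1) → Bool, Real.exp (a * (∑ i, sval (s i)) ^ 2) =
        ∑ s : Fin n → Bool, (Real.exp (a * (1 + ∑ i, sval (s i)) ^ 2) +
          Real.exp (a * (-1 + ∑ i, sval (s i)) ^ 2)) := by
      rw [← (Fin.consEquiv fun _ => Bool).sum_comp, Fintype.sum_prod_type_right]
      refine Finset.sum_congr rfl fun s _ => ?_
      simp [Fin.consEquiv, Fin.sum_univ_succ, sval]
    rw [hsplit]
    refine (Finset.sum_le_sum fun s _ => hstep _).trans ?_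
    rw [← Finset.mul_sum]
    refine (mul_le_mul_of_nonneg_left (ih (a + 2 * a ^ 2) (by positivity) (by linarith))
      (by positivity)).trans ?_
    have hsqrt : Real.exp a * √(1 - 2 * (n + 1) * a) ≤ √(1 - 2 * n * (a + 2 * a ^ 2)) := by
      refine Real.le_sqrt_of_sq_le ?_
      rw [mul_pow, Real.sq_sqrt (by linarith), ← Real.exp_nat_mul]
      exact_mod_cast hkey
    push_cast
    rw [mul_div_assoc', div_le_div_iff₀ (Real.sqrt_pos.2 (by linarith))
      (Real.sqrt_pos.2 (by linarith)), pow_succ]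
    calc 2 * Real.exp a * 2 ^ n * √(1 - 2 * (n + 1) * a)
        = 2 ^ n * 2 * (Real.exp a * √(1 - 2 * (n + 1) * a)) := by ring
      _ ≤ _ := mul_le_mul_of_nonneg_left hsqrt (by positivity)

/-- The sum over signs `s, t` of `exp (κ (∑ᵢ sᵢ) (∑ⱼ tⱼ))`. -/
lemma sum_sum_exp_mul_le (N : ℕ) (κ : ℝ) (hκ : N ^ 2 * κ ^ 2 < 1) :
    ∑ s : Fin N → Bool, ∑ t : Fin N → Bool,
      Real.exp (κ * (∑ i, sval (s i)) * ∑ j, sval (t j)) ≤ 4 ^ N / √(1 - N ^ 2 * κ ^ 2) := by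
  have hinner : ∀ S : ℝ, ∑ t : Fin N → Bool, Real.exp (κ * S * ∑ j, sval (t j)) ≤
      2 ^ N * Real.exp (N * κ ^ 2 / 2 * S ^ 2) := by
    intro S
    have h : ∑ t : Fin N → Bool, Real.exp (κ * S * ∑ j, sval (t j)) =
        (2 * Real.cosh (κ * S)) ^ N := by
      simp only [Finset.mul_sum, Real.exp_sum]
      rw [← Fintype.prod_sum fun (_ : Fin N) (b : Bool) => Real.exp (κ * S * sval b)]
      simp [sval, Real.cosh_eq]
      congr 1
      ring
    rw [h, mul_pow]
    refine mul_le_mul_of_nonneg_left ?_ (by positivity)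
    refine (pow_le_pow_left₀ (Real.cosh_pos _).le (Real.cosh_le_exp_half_sq _) N).trans ?_
    rw [← Real.exp_nat_mul]
    exact (congrArg Real.exp (by ring)).le
  refine (Finset.sum_le_sum fun s _ => hinner _).trans ?_
  rw [← Finset.mul_sum]
  refine (mul_le_mul_of_nonneg_left
    (sum_exp_mul_sq_le N (N * κ ^ 2 / 2) (by positivity) (by nlinarith)) (by positivity)).trans ?_
  rw [mul_div_assoc', ← mul_pow, show 2 * (N : ℝ) * (N * κ ^ 2 / 2) = N ^ 2 * κ ^ 2 by ring]
  norm_num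

/-- The character sum `∑ₛₜ ∏ᵢⱼ (1 + q sᵢ tⱼ)` with `q = tanh κ`. -/
lemma sum_prod_one_add_tanh_mul_le (N : ℕ) (κ : ℝ) (hκ : N ^ 2 * κ ^ 2 < 1) :
    (∑ s : Fin N → Bool, ∑ t : Fin N → Bool, ∏ x : Fin N × Fin N,
      (1 + Real.tanh κ * (sval (s x.1) * sval (t x.2)))) * (1 - (N ^ 2 * κ ^ 2) ^ 2) ≤ 4 ^ N := by
  have hcosh := Real.cosh_pos κ
  have hfactor : ∀ a b : Bool, 1 + Real.tanh κ * (sval a * sval b) =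
      Real.exp (κ * (sval a * sval b)) / Real.cosh κ := by
    intro a b
    rw [Real.tanh_eq_sinh_div_cosh, eq_div_iff hcosh.ne']
    have h1 := Real.cosh_add_sinh κ
    have h2 := Real.cosh_sub_sinh κ
    cases a <;> cases b <;> simp [sval] <;> field_simp <;> linarith
  have hprod : ∀ s t : Fin N → Bool, ∏ x : Fin N × Fin N,
      (1 + Real.tanh κ * (sval (s x.1) * sval (t x.2))) =
      Real.exp (κ * (∑ i, sval (s i)) * ∑ j, sval (t j)) / Real.cosh κ ^ (N * N) := by
    intro s t
    simp only [hfactor]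
    rw [Finset.prod_div_distrib, ← Real.exp_sum, ← Finset.mul_sum, Fintype.sum_prod_type,
      mul_assoc κ, Fintype.sum_mul_sum]
    simp
  simp only [hprod, ← Finset.sum_div]
  set y : ℝ := N ^ 2 * κ ^ 2 with hy
  have hy0 : 0 ≤ y := by positivity
  have hbern : 1 + y / 2 ≤ Real.cosh κ ^ (N * N) := by
    have h := one_add_mul_le_pow (a := κ ^ 2 / 2) (by nlinarith [sq_nonneg κ]) (N * N)
    refine le_trans (le_of_eq ?_)
      (h.trans (pow_le_pow_left₀ (by positivity) (one_add_half_sq_le_cosh κ) _))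
    push_cast
    rw [hy]
    ring
  have hsqrt : 1 - y ^ 2 ≤ √(1 - y) * (1 + y / 2) := by
    have h : (1 - y ^ 2) / (1 + y / 2) ≤ √(1 - y) := by
      refine Real.le_sqrt_of_sq_le ?_
      rw [div_pow, div_le_iff₀ (by positivity)]
      have h1 : 0 ≤ y ^ 2 * (1 - y) := mul_nonneg (sq_nonneg y) (by linarith)
      have h2 : 0 ≤ y ^ 2 * (1 - y ^ 2) := mul_nonneg (sq_nonneg y) (by nlinarith)
      nlinarith
    exact (div_le_iff₀ (by positivity)).1 h
  have hs : 0 < √(1 - y) := Real.sqrt_pos.2 (by linarith)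
  have hsum := sum_sum_exp_mul_le N κ hκ
  rw [← hy, le_div_iff₀ hs] at hsum
  rw [div_mul_eq_mul_div, div_le_iff₀ (by positivity)]
  set A := ∑ s : Fin N → Bool, ∑ t : Fin N → Bool,
      Real.exp (κ * (∑ i, sval (s i)) * ∑ j, sval (t j))
  have hA0 : 0 ≤ A := by positivity
  calc A * (1 - y ^ 2) ≤ A * (√(1 - y) * (1 + y / 2)) := mul_le_mul_of_nonneg_left hsqrt hA0
    _ = A * √(1 - y) * (1 + y / 2) := by ring
    _ ≤ 4 ^ N * Real.cosh κ ^ (N * N) := by gcongr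

lemma sum_prod_ite_sval {N : ℕ} (c : Fin N → Fin N → Bool) :
    ∑ s : Fin N → Bool, ∏ i, ∏ j, (if c i j then sval (s i) else 1) =
      ∏ i, (1 + ∏ j, (if c i j then (-1 : ℝ) else 1)) := by
  rw [← Fintype.prod_sum fun (i : Fin N) (b : Bool) => ∏ j, (if c i j then sval b else 1)]
  simp [sval]

/-- Averaging `∏_{(i, j) ∈ d} q sᵢ tⱼ` over the signs factorizes into the weight of `d` and
the row and column parity constraints. -/
lemma sum_prod_ite_mul_sval {N : ℕ} (q : ℝ) (d : Fin N × Fin N → Bool) :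
    ∑ s : Fin N → Bool, ∑ t : Fin N → Bool,
      ∏ x, (if d x then q * (sval (s x.1) * sval (t x.2)) else 1) =
    (∏ x, if d x then q else 1) * ((∏ i, (1 + ∏ j, (if d (i, j) then (-1 : ℝ) else 1))) *
      ∏ j, (1 + ∏ i, (if d (i, j) then (-1 : ℝ) else 1))) := by
  rw [← sum_prod_ite_sval fun i j => d (i, j), ← sum_prod_ite_sval fun j i => d (i, j),
    Fintype.sum_mul_sum, Finset.mul_sum]
  refine Finset.sum_congr rfl fun s _ => ?_
  rw [Finset.mul_sum]
  refine Finset.sum_congr rfl fun t _ => ?_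
  rw [Finset.prod_comm (f := fun j i => if d (i, j) then sval (t j) else 1),
    ← Fintype.prod_prod_type' (f := fun i j => if d (i, j) then sval (s i) else 1),
    ← Fintype.prod_prod_type' (f := fun i j => if d (i, j) then sval (t j) else 1),
    ← Finset.prod_mul_distrib, ← Finset.prod_mul_distrib]
  refine Finset.prod_congr rfl fun x _ => ?_
  split_ifs <;> simp

lemma neg_one_le_prod_ite {N : ℕ} (c : Fin N → Bool) :
    (-1 : ℝ) ≤ ∏ j, (if c j then (-1 : ℝ) else 1) := by
  refine (abs_le.1 (le_of_eq ?_)).1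
  rw [Finset.abs_prod]
  refine Finset.prod_eq_one fun j _ => ?_
  split_ifs <;> simp

lemma sum_prod_ite_mul_sval_nonneg {N : ℕ} {q : ℝ} (hq : 0 ≤ q) (d : Fin N × Fin N → Bool) :
    0 ≤ ∑ s : Fin N → Bool, ∑ t : Fin N → Bool,
      ∏ x, (if d x then q * (sval (s x.1) * sval (t x.2)) else 1) := by
  rw [sum_prod_ite_mul_sval]
  refine mul_nonneg (Finset.prod_nonneg fun x _ => by split_ifs <;> positivity)
    (mul_nonneg (Finset.prod_nonneg fun i _ => ?_) (Finset.prod_nonneg fun j _ => ?_))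
  · linarith [neg_one_le_prod_ite fun j => d (i, j)]
  · linarith [neg_one_le_prod_ite fun i => d (i, j)]

lemma sum_sum_prod_ite_mul_sval {N : ℕ} (q : ℝ) :
    ∑ d : Fin N × Fin N → Bool, ∑ s : Fin N → Bool, ∑ t : Fin N → Bool,
      ∏ x, (if d x then q * (sval (s x.1) * sval (t x.2)) else 1) =
    ∑ s : Fin N → Bool, ∑ t : Fin N → Bool, ∏ x : Fin N × Fin N,
      (1 + q * (sval (s x.1) * sval (t x.2))) := by
  rw [Finset.sum_comm]
  refine Finset.sum_congr rfl fun s _ => ?_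
  rw [Finset.sum_comm]
  refine Finset.sum_congr rfl fun t _ => ?_
  rw [← Fintype.prod_sum fun (x : Fin N × Fin N) (b : Bool) =>
    if b then q * (sval (s x.1) * sval (t x.2)) else 1]
  simp [add_comm]

/-- For a multiplicative family of sign matrices whose rows and columns have product one, the
total weight is controlled by the number of defect-free elements. -/
lemma sum_defect_weight_le {Ω : Type*} [Fintype Ω] {N : ℕ} (d : Ω → Fin N × Fin N → Bool)
    (op : Ω → Ω → Ω) (hop : ∀ η, Function.Injective fun σ => op σ η)
    (hd : ∀ σ η, d σ = d η → d (op σ η) = fun _ => false)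
    (hrow : ∀ σ i, ∏ j, (if d σ (i, j) then (-1 : ℝ) else 1) = 1)
    (hcol : ∀ σ j, ∏ i, (if d σ (i, j) then (-1 : ℝ) else 1) = 1)
    (κ : ℝ) (hκ0 : 0 ≤ Real.tanh κ) (hκ : N ^ 2 * κ ^ 2 < 1) :
    (∑ σ, ∏ x, if d σ x then Real.tanh κ else 1) * (1 - (N ^ 2 * κ ^ 2) ^ 2) ≤
      ((Finset.univ.filter fun σ => d σ = fun _ => false).card : ℝ) := by
  set q := Real.tanh κ with hq
  set G : ℝ := ((Finset.univ.filter fun σ => d σ = fun _ => false).card : ℝ) with hG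
  let F : (Fin N × Fin N → Bool) → ℝ := fun e => ∑ s : Fin N → Bool, ∑ t : Fin N → Bool,
      ∏ x, (if e x then q * (sval (s x.1) * sval (t x.2)) else 1)
  have hF0 : ∀ e, 0 ≤ F e := sum_prod_ite_mul_sval_nonneg hκ0
  have hFd : ∀ σ, (4 : ℝ) ^ N * ∏ x, (if d σ x then q else 1) = F (d σ) := by
    intro σ
    simp only [F, sum_prod_ite_mul_sval, hrow, hcol]
    norm_num [← mul_pow]
    ring
  have hfiber : ∀ e, ((Finset.univ.filter fun σ => d σ = e).card : ℝ) ≤ G := by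
    intro e
    rcases (Finset.univ.filter fun σ => d σ = e).eq_empty_or_nonempty with h | ⟨η, hη⟩
    · rw [h]
      simp [hG]
    · refine Nat.cast_le.2 (Finset.card_le_card_of_injOn (fun σ => op σ η) ?_
        (hop η).injOn)
      intro σ hσ
      simp only [Finset.coe_filter, Finset.mem_univ, true_and, Set.mem_ofPred_eq,
        Finset.mem_filter] at hσ hη ⊢
      exact hd σ η (hσ.trans hη.symm)
  have hsum : ∑ σ, F (d σ) ≤ G * ∑ e, F e := by
    rw [← Finset.sum_fiberwise Finset.univ d, Finset.mul_sum]
    refine Finset.sum_le_sum fun e _ => ?_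
    rw [Finset.sum_congr rfl fun σ hσ => congrArg F (Finset.mem_filter.1 hσ).2,
      Finset.sum_const, nsmul_eq_mul]
    exact mul_le_mul_of_nonneg_right (hfiber e) (hF0 e)
  have hchar := sum_prod_one_add_tanh_mul_le N κ hκ
  rw [← hq, ← sum_sum_prod_ite_mul_sval] at hchar
  have hy : 0 ≤ 1 - ((N : ℝ) ^ 2 * κ ^ 2) ^ 2 := by
    have : 0 ≤ (N : ℝ) ^ 2 * κ ^ 2 := by positivity
    nlinarith
  have hG0 : 0 ≤ G := Nat.cast_nonneg _
  refine le_of_mul_le_mul_left ?_ (show (0 : ℝ) < 4 ^ N by positivity)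
  calc (4 : ℝ) ^ N * ((∑ σ, ∏ x, if d σ x then q else 1) * (1 - (N ^ 2 * κ ^ 2) ^ 2))
      = (∑ σ, F (d σ)) * (1 - (N ^ 2 * κ ^ 2) ^ 2) := by
        rw [← mul_assoc, Finset.mul_sum]
        simp only [hFd]
    _ ≤ G * ((∑ e, F e) * (1 - (N ^ 2 * κ ^ 2) ^ 2)) := by
        rw [← mul_assoc]
        exact mul_le_mul_of_nonneg_right hsum hy
    _ ≤ G * 4 ^ N := mul_le_mul_of_nonneg_left hchar hG0
    _ = 4 ^ N * G := mul_comm _ _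

/-- Lower bound on the Gibbs weight of the defect-free elements for a Hamiltonian
`-(1/2) ∑ₓ pₓ`, where the sign matrices `p` are multiplicative and all their rows and columns
have product one. -/
lemma one_sub_le_sum_gibbs {Ω : Type*} [Fintype Ω] [Nonempty Ω] {N : ℕ}
    (p : Ω → Fin N × Fin N → ℝ)
    (hp : ∀ σ x, p σ x = 1 ∨ p σ x = -1)
    (op : Ω → Ω → Ω) (hop : ∀ η, Function.Injective fun σ => op σ η)
    (hmul : ∀ σ η x, p (op σ η) x = p σ x * p η x)
    (hrow : ∀ σ i, ∏ j, p σ (i, j) = 1) (hcol : ∀ σ j, ∏ i, p σ (i, j) = 1)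
    (h : Ω → ℝ) (hh : ∀ σ, h σ = -(1 / 2) * ∑ x, p σ x)
    (β : ℝ) (hβ : Real.exp (-β) ≤ 1 / 2) (hN : N * (2 * Real.exp (-β)) < 1)
    (G : Finset Ω) (hG : ∀ σ, (∀ η, h σ ≤ h η) → σ ∈ G) :
    1 - (N * (2 * Real.exp (-β))) ^ 4 ≤
      ∑ σ ∈ G, Real.exp (-β * h σ) / ∑ η, Real.exp (-β * h η) := by
  have hq0 := Real.exp_pos (-β)
  set q := Real.exp (-β) with hq
  obtain ⟨κ, hκ, hκ0, hκq⟩ : ∃ κ, Real.tanh κ = q ∧ 0 ≤ κ ∧ κ ≤ 2 * q := by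
    refine ⟨Real.artanh q, Real.tanh_artanh ⟨by linarith, by linarith⟩,
      Real.artanh_nonneg hq0.le, ?_⟩
    rw [Real.artanh_eq_half_log ⟨by linarith, by linarith⟩]
    have hle := Real.log_le_sub_one_of_pos (x := (1 + q) / (1 - q))
      (div_pos (by linarith) (by linarith))
    have : (1 + q) / (1 - q) - 1 ≤ 4 * q := by
      rw [sub_le_iff_le_add, div_le_iff₀ (by linarith)]
      nlinarith
    linarith
  have hy : (N : ℝ) ^ 2 * κ ^ 2 ≤ (N * (2 * q)) ^ 2 := by
    rw [← mul_pow]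
    gcongr
  have hy1 : (N * (2 * q)) ^ 2 < 1 := by
    have : 0 ≤ N * (2 * q) := by positivity
    nlinarith
  let d : Ω → Fin N × Fin N → Bool := fun σ x => decide (p σ x = -1)
  have hsign : ∀ σ x, (if d σ x then (-1 : ℝ) else 1) = p σ x := by
    intro σ x
    rcases hp σ x with h1 | h1 <;> simp [d, h1]
    norm_num
  have hmain := sum_defect_weight_le d op hop
    (by
      intro σ η he
      funext x
      have hx : p σ x = p η x := by rw [← hsign, ← hsign, he]
      rcases hp η x with h1 | h1 <;> simp [d, hmul, hx, h1] <;> norm_num)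
    (by simpa only [hsign] using hrow) (by simpa only [hsign] using hcol) κ
    (by rw [hκ]; exact hq0.le) (hy.trans_lt hy1)
  rw [hκ] at hmain
  have hle : ∀ σ, ∑ x, p σ x ≤ (N * N : ℕ) := by
    intro σ
    calc ∑ x, p σ x ≤ ∑ x : Fin N × Fin N, (1 : ℝ) :=
          Finset.sum_le_sum fun x _ => by rcases hp σ x with h1 | h1 <;> rw [h1]; norm_num
      _ = (N * N : ℕ) := by simp
  have hzero : ∀ σ, (d σ = fun _ => false) → h σ = -(1 / 2) * (N * N : ℕ) := by
    intro σ hσ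
    rw [hh, ← Finset.sum_congr rfl fun x _ => hsign σ x, hσ]
    simp
  have hweight : ∀ σ, Real.exp (-β * h σ) =
      Real.exp (β / 2 * (N * N : ℕ)) * ∏ x, if d σ x then q else 1 := by
    intro σ
    have hx : ∀ x, Real.exp (β / 2 * p σ x) = Real.exp (β / 2) * if d σ x then q else 1 := by
      intro x
      rcases hp σ x with h1 | h1
      · have : ¬ ((1 : ℝ) = -1) := by norm_num
        simp [d, h1, this]
      · simp only [d, h1, decide_true, if_true, hq, ← Real.exp_add]
        congr 1
        ring
    rw [hh, show -β * (-(1 / 2) * ∑ x, p σ x) = β / 2 * ∑ x, p σ x by ring, Finset.mul_sum,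
      Real.exp_sum, Finset.prod_congr rfl fun x _ => hx x, Finset.prod_mul_distrib]
    simp [← Real.exp_nat_mul, mul_comm]
  have hZ : 0 < ∑ η, Real.exp (-β * h η) :=
    Finset.sum_pos (fun η _ => Real.exp_pos _) Finset.univ_nonempty
  rw [← Finset.sum_div, le_div_iff₀ hZ]
  have hGsub : (Finset.univ.filter fun σ => d σ = fun _ => false) ⊆ G := by
    intro σ hσ
    refine hG σ fun η => ?_
    rw [hzero σ (Finset.mem_filter.1 hσ).2, hh]
    linarith [hle η]
  set E := Real.exp (β / 2 * (N * N : ℕ)) with hE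
  calc (1 - (N * (2 * q)) ^ 4) * ∑ η, Real.exp (-β * h η)
      ≤ (1 - (N ^ 2 * κ ^ 2) ^ 2) * ∑ η, Real.exp (-β * h η) := by
        refine mul_le_mul_of_nonneg_right ?_ hZ.le
        have := pow_le_pow_left₀ (by positivity) hy 2
        rw [← pow_mul, show 2 * 2 = 4 from rfl] at this
        linarith
    _ = E * ((∑ σ, ∏ x, if d σ x then q else 1) * (1 - (N ^ 2 * κ ^ 2) ^ 2)) := by
        simp only [hweight, ← Finset.mul_sum]
        ring
    _ ≤ E * (Finset.univ.filter fun σ => d σ = fun _ => false).card :=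
        mul_le_mul_of_nonneg_left hmain (Real.exp_pos _).le
    _ = ∑ σ ∈ Finset.univ.filter fun σ => d σ = fun _ => false, Real.exp (-β * h σ) := by
        rw [Finset.sum_congr rfl (g := fun _ => E), Finset.sum_const, nsmul_eq_mul, mul_comm]
        intro σ hσ
        rw [hzero σ (Finset.mem_filter.1 hσ).2, hE]
        congr 1
        ring
    _ ≤ ∑ σ ∈ G, Real.exp (-β * h σ) :=
        Finset.sum_le_sum_of_subset_of_nonneg hGsub fun _ _ _ => (Real.exp_pos _).le

lemma sval_eq_one_or (b : Bool) : sval b = 1 ∨ sval b = -1 := by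
  cases b <;> simp [sval]

lemma sval_beq (a b : Bool) : sval (a == b) = sval a * sval b := by
  cases a <;> cases b <;> simp [sval]

lemma sval_mul_self (b : Bool) : sval b * sval b = 1 := by
  cases b <;> simp [sval]

lemma beq_left_injective {ι : Type*} (η : ι → Bool) :
    Function.Injective fun (σ : ι → Bool) i => σ i == η i := by
  intro σ σ' h
  funext i
  have hi : (σ i == η i) = (σ' i == η i) := congrFun h i
  revert hi
  cases σ i <;> cases σ' i <;> cases η i <;> simp

lemma mul_four_eq_one_or {a b c d : ℝ} (ha : a = 1 ∨ a = -1) (hb : b = 1 ∨ b = -1)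
    (hc : c = 1 ∨ c = -1) (hd : d = 1 ∨ d = -1) : a * b * c * d = 1 ∨ a * b * c * d = -1 := by
  rcases ha with rfl | rfl <;> rcases hb with rfl | rfl <;> rcases hc with rfl | rfl <;>
    rcases hd with rfl | rfl <;> simp

lemma fsucc_bijective (L : ℕ) : Function.Bijective (fsucc : Fin L → Fin L) := by
  refine Finite.injective_iff_bijective.1 fun a b h => ?_
  have h' : a.val + 1 ≡ b.val + 1 [MOD L] := congrArg Fin.val h
  have h'' := Nat.ModEq.add_right_cancel' 1 h'
  rw [Nat.ModEq, Nat.mod_eq_of_lt a.2, Nat.mod_eq_of_lt b.2] at h''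
  exact Fin.ext h''

lemma prod_mul_fsucc_eq_one {L : ℕ} (a : Fin L → ℝ) (ha : ∀ i, a i * a i = 1) :
    ∏ i, a i * a (fsucc i) = 1 := by
  rw [Finset.prod_mul_distrib, (fsucc_bijective L).prod_comp a, ← Finset.prod_mul_distrib]
  exact Finset.prod_eq_one fun i _ => ha i

lemma prod_plaqP_row {L : ℕ} (σ : ConfigP L) (i : Fin L) : ∏ j, plaqP L σ (i, j) = 1 := by
  rw [← prod_mul_fsucc_eq_one (fun j => sval (σ (i, j)) * sval (σ (fsucc i, j)))
    fun j => by rw [mul_mul_mul_comm, sval_mul_self, sval_mul_self, one_mul]]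
  exact Finset.prod_congr rfl fun j _ => by simp only [plaqP]; ring

lemma prod_plaqP_col {L : ℕ} (σ : ConfigP L) (j : Fin L) : ∏ i, plaqP L σ (i, j) = 1 := by
  rw [← prod_mul_fsucc_eq_one (fun i => sval (σ (i, j)) * sval (σ (i, fsucc j)))
    fun i => by rw [mul_mul_mul_comm, sval_mul_self, sval_mul_self, one_mul]]
  exact Finset.prod_congr rfl fun i _ => by simp only [plaqP]; ring

lemma spinAt_site {L : ℕ} (σ : Config L) (i : Fin L × Fin L) :
    spinAt L σ ((i.1 : ℤ) + 1, (i.2 : ℤ) + 1) = sval (σ i) := by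
  have h : (∃ k : Fin L × Fin L, ((k.1 : ℤ) + 1, (k.2 : ℤ) + 1) =
      ((i.1 : ℤ) + 1, (i.2 : ℤ) + 1) ∧ σ k = false) ↔ σ i = false := by
    refine ⟨?_, fun h => ⟨i, rfl, h⟩⟩
    rintro ⟨k, hk, hσ⟩
    rw [Prod.mk.injEq] at hk
    have : k = i := Prod.ext (Fin.ext (by omega)) (Fin.ext (by omega))
    rwa [← this]
  rw [spinAt]
  simp only [h]
  cases σ i <;> simp [sval]

lemma spinAt_outside {L : ℕ} (σ : Config L) {y : ℤ × ℤ}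
    (hy : ¬ ∃ i : Fin L × Fin L, ((i.1 : ℤ) + 1, (i.2 : ℤ) + 1) = y) : spinAt L σ y = 1 :=
  if_neg fun ⟨i, hi, _⟩ => hy ⟨i, hi⟩

lemma spinAt_beq {L : ℕ} (σ η : Config L) (y : ℤ × ℤ) :
    spinAt L (fun i => σ i == η i) y = spinAt L σ y * spinAt L η y := by
  by_cases hy : ∃ i : Fin L × Fin L, ((i.1 : ℤ) + 1, (i.2 : ℤ) + 1) = y
  · obtain ⟨i, rfl⟩ := hy
    simp only [spinAt_site, sval_beq]
  · simp only [spinAt_outside _ hy, mul_one]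

lemma spinAt_eq_one_or {L : ℕ} (σ : Config L) (y : ℤ × ℤ) :
    spinAt L σ y = 1 ∨ spinAt L σ y = -1 := by
  rw [spinAt]
  split_ifs <;> simp

lemma spinAt_mul_self {L : ℕ} (σ : Config L) (y : ℤ × ℤ) :
    spinAt L σ y * spinAt L σ y = 1 := by
  rcases spinAt_eq_one_or σ y with h | h <;> rw [h] <;> norm_num

lemma prod_mul_succ (a : ℤ → ℝ) (ha : ∀ k, a k * a k = 1) (n : ℕ) :
    ∏ j : Fin n, a (j : ℕ) * a ((j : ℕ) + 1) = a 0 * a n := by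
  induction n with
  | zero => simp [ha]
  | succ n ih =>
    rw [Fin.prod_univ_castSucc]
    simp only [Fin.val_castSucc, Fin.val_last, ih]
    push_cast
    calc a 0 * a n * (a n * a (n + 1)) = a 0 * a (n + 1) * (a n * a n) := by ring
      _ = a 0 * a (n + 1) := by rw [ha, mul_one]

lemma prod_plaq_row {L : ℕ} (σ : Config L) (i : ℤ) :
    ∏ j : Fin (L + 1), plaq L σ (i, (j : ℕ)) = 1 := by
  have h0 : ∀ k : ℤ, spinAt L σ (k, 0) = 1 := fun k => spinAt_outside σ (by
    rintro ⟨m, hm⟩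
    rw [Prod.mk.injEq] at hm
    omega)
  have h1 : ∀ k : ℤ, spinAt L σ (k, (L + 1 : ℕ)) = 1 := fun k => spinAt_outside σ (by
    rintro ⟨m, hm⟩
    rw [Prod.mk.injEq] at hm
    omega)
  have h := prod_mul_succ (fun j => spinAt L σ (i, j) * spinAt L σ (i + 1, j))
    (fun j => by rw [mul_mul_mul_comm, spinAt_mul_self, spinAt_mul_self, one_mul]) (L + 1)
  simp only [h0, h1, one_mul] at h
  rw [← h]
  exact Finset.prod_congr rfl fun j _ => by simp only [plaq]; ring

lemma prod_plaq_col {L : ℕ} (σ : Config L) (j : ℤ) :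
    ∏ i : Fin (L + 1), plaq L σ ((i : ℕ), j) = 1 := by
  have h0 : ∀ k : ℤ, spinAt L σ (0, k) = 1 := fun k => spinAt_outside σ (by
    rintro ⟨m, hm⟩
    rw [Prod.mk.injEq] at hm
    omega)
  have h1 : ∀ k : ℤ, spinAt L σ ((L + 1 : ℕ), k) = 1 := fun k => spinAt_outside σ (by
    rintro ⟨m, hm⟩
    rw [Prod.mk.injEq] at hm
    omega)
  have h := prod_mul_succ (fun i => spinAt L σ (i, j) * spinAt L σ (i, j + 1))
    (fun i => by rw [mul_mul_mul_comm, spinAt_mul_self, spinAt_mul_self, one_mul]) (L + 1)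
  simp only [h0, h1, one_mul] at h
  rw [← h]
  exact Finset.prod_congr rfl fun i _ => by simp only [plaq]; ring

lemma sum_plaqSet (L : ℕ) (f : ℤ × ℤ → ℝ) :
    ∑ x ∈ plaqSet L, f x = ∑ x : Fin (L + 1) × Fin (L + 1), f ((x.1 : ℕ), (x.2 : ℕ)) := by
  symm
  refine Finset.sum_bij (fun x _ => (((x.1 : ℕ) : ℤ), ((x.2 : ℕ) : ℤ))) ?_ ?_ ?_
    fun _ _ => rfl
  · intro x _
    simp only [plaqSet, Finset.mem_product, Finset.mem_Icc]
    omega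
  · intro x _ y _ h
    rw [Prod.mk.injEq] at h
    exact Prod.ext (Fin.ext (by omega)) (Fin.ext (by omega))
  · intro y hy
    simp only [plaqSet, Finset.mem_product, Finset.mem_Icc] at hy
    exact ⟨(⟨y.1.toNat, by omega⟩, ⟨y.2.toNat, by omega⟩), Finset.mem_univ _,
      Prod.ext (by simp; omega) (by simp; omega)⟩

lemma one_sub_le_gibbs_ground (L : ℕ) (β : ℝ) (hβ : Real.exp (-β) ≤ 1 / 2)
    (hL : ((L + 1 : ℕ) : ℝ) * (2 * Real.exp (-β)) < 1) :
    1 - (((L + 1 : ℕ) : ℝ) * (2 * Real.exp (-β))) ^ 4 ≤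
      ∑ σ ∈ Finset.univ.filter (fun σ : Config L => σ ∈ Ground L), gibbs L β σ := by
  refine one_sub_le_sum_gibbs (N := L + 1)
    (fun (σ : Config L) x => plaq L σ ((x.1 : ℕ), (x.2 : ℕ))) ?_ (fun σ η i => σ i == η i)
    beq_left_injective ?_ (fun σ i => prod_plaq_row σ (i : ℕ)) (fun σ j => prod_plaq_col σ (j : ℕ))
    (ham L) (fun σ => congrArg (-(1 / 2) * ·) (sum_plaqSet L (plaq L σ))) β hβ hL _
    fun σ hσ => Finset.mem_filter.2 ⟨Finset.mem_univ _, hσ⟩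
  · intro σ x
    exact mul_four_eq_one_or (spinAt_eq_one_or _ _) (spinAt_eq_one_or _ _)
      (spinAt_eq_one_or _ _) (spinAt_eq_one_or _ _)
  · intro σ η x
    simp only [plaq, spinAt_beq]
    ring

lemma one_sub_le_gibbsP_groundP (L : ℕ) (β : ℝ) (hβ : Real.exp (-β) ≤ 1 / 2)
    (hL : (L : ℝ) * (2 * Real.exp (-β)) < 1) :
    1 - ((L : ℝ) * (2 * Real.exp (-β))) ^ 4 ≤
      ∑ σ ∈ Finset.univ.filter (fun σ : ConfigP L => σ ∈ GroundP L), gibbsP L β σ := by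
  refine one_sub_le_sum_gibbs (plaqP L) ?_ (fun σ η i => σ i == η i) beq_left_injective ?_
    prod_plaqP_row prod_plaqP_col (hamP L) (fun σ => rfl) β hβ hL _
    fun σ hσ => Finset.mem_filter.2 ⟨Finset.mem_univ _, hσ⟩
  · intro σ x
    exact mul_four_eq_one_or (sval_eq_one_or _) (sval_eq_one_or _)
      (sval_eq_one_or _) (sval_eq_one_or _)
  · intro σ η x
    simp only [plaqP, sval_beq]
    ring

/-- Lemma `lem:dom`, domination of ground states: for `θ ∈ {+, per}` and
`L = L_c`, `π(𝒢) ≥ 1 - O(e^{-2β})`. -/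
theorem ground_state_domination :
    ∃ C β₀ : ℝ, 0 < C ∧ ∀ β : ℝ, β₀ ≤ β →
      1 - C * Real.exp (-2 * β) ≤
        (∑ σ ∈ Finset.univ.filter (fun σ : Config (SPM.Lc β) => σ ∈ Ground (SPM.Lc β)),
          gibbs (SPM.Lc β) β σ) ∧
      1 - C * Real.exp (-2 * β) ≤
        (∑ σ ∈ Finset.univ.filter (fun σ : ConfigP (SPMP.Lc β) => σ ∈ GroundP (SPMP.Lc β)),
          gibbsP (SPMP.Lc β) β σ) := by
  refine ⟨256, 8, by norm_num, fun β hβ => ?_⟩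
  set u := Real.exp (-(β / 2)) with hu
  have hu0 : 0 < u := Real.exp_pos _
  have hvu : Real.exp (β / 2) * u = 1 := by rw [hu, ← Real.exp_add]; simp
  have hv : 5 ≤ Real.exp (β / 2) := by linarith [Real.add_one_le_exp (β / 2)]
  have hu1 : u ≤ 1 / 5 := by nlinarith
  have hq : Real.exp (-β) = u ^ 2 := by
    rw [hu, ← Real.exp_nat_mul]
    congr 1
    push_cast
    ring
  have hq4 : Real.exp (-2 * β) = u ^ 4 := by
    rw [hu, ← Real.exp_nat_mul]
    congr 1
    push_cast
    ring
  have hfloor : (⌊Real.exp (β / 2)⌋₊ : ℝ) ≤ Real.exp (β / 2) :=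
    Nat.floor_le (Real.exp_pos _).le
  have hsize : ∀ N : ℕ, (N : ℝ) ≤ 2 * Real.exp (β / 2) → N * (2 * Real.exp (-β)) ≤ 4 * u := by
    intro N hN
    rw [hq]
    calc (N : ℝ) * (2 * u ^ 2) ≤ 2 * Real.exp (β / 2) * (2 * u ^ 2) := by gcongr
      _ = 4 * u * (Real.exp (β / 2) * u) := by ring
      _ = 4 * u := by rw [hvu, mul_one]
  have hbound : ∀ N : ℕ, (N : ℝ) ≤ 2 * Real.exp (β / 2) →
      1 - 256 * Real.exp (-2 * β) ≤ 1 - (N * (2 * Real.exp (-β))) ^ 4 := by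
    intro N hN
    have h := pow_le_pow_left₀ (by positivity) (hsize N hN) 4
    rw [hq4]
    linarith [mul_pow 4 u 4]
  have hhalf : Real.exp (-β) ≤ 1 / 2 := by rw [hq]; nlinarith
  constructor
  · have hN : ((SPM.Lc β + 1 : ℕ) : ℝ) ≤ 2 * Real.exp (β / 2) := by
      rw [SPM.Lc]
      push_cast
      linarith
    exact (hbound _ hN).trans
      (one_sub_le_gibbs_ground _ β hhalf ((hsize _ hN).trans_lt (by linarith)))
  · have hN : ((SPMP.Lc β : ℕ) : ℝ) ≤ 2 * Real.exp (β / 2) := by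
      rw [SPMP.Lc]
      linarith
    exact (hbound _ hN).trans
      (one_sub_le_gibbsP_groundP _ β hhalf ((hsize _ hN).trans_lt (by linarith)))

end
end

section
/- Path length for mid paths: for Λ=[1:L]² with all-plus boundary conditions and any configuration σ∈{-1,+1}^Λ with at least two defects, the mid path γ(σ) satisfies |γ(σ)| ≤ 6L²/√|D(σ)|, where |γ(σ)| is the number of spin flips in the path and |D(σ)| is the number of defects of σ. -/
open scoped BigOperators

attribute [local instance] Classical.propDecidable

noncomputable section

namespace SPM

/-- The paper's "lexicographic" (reading) order on `ℤ²`: `a` comes before `b` iff `a` is in a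
higher row, or in the same row strictly to the left. -/
def lexLt (a b : ℤ × ℤ) : Prop := b.2 < a.2 ∨ (a.2 = b.2 ∧ a.1 < b.1)

/-- The `ℓ¹` distance on `ℤ²`. -/
def l1 (a b : ℤ × ℤ) : ℤ := |a.1 - b.1| + |a.2 - b.2|

/-- `(x, y)` is the pair of distinct defects of `σ` minimizing `‖x-y‖₁`, with `x` before `y`
in lexicographic order, ties between minimizing pairs broken by comparing first and then
second components lexicographically. -/
def MinPair (L : ℕ) (σ : Config L) (x y : ℤ × ℤ) : Prop :=
  x ∈ defects L σ ∧ y ∈ defects L σ ∧ x ≠ y ∧ lexLt x y ∧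
  (∀ a ∈ defects L σ, ∀ b ∈ defects L σ, a ≠ b → l1 x y ≤ l1 a b) ∧
  (∀ a ∈ defects L σ, ∀ b ∈ defects L σ, a ≠ b → lexLt a b → l1 a b = l1 x y →
    lexLt x a ∨ (x = a ∧ (lexLt y b ∨ y = b)))

/-- Flip the spin at the integer point `z` (when `z ∈ [1:L]²`; otherwise do nothing). -/
def flipZ (L : ℕ) (σ : Config L) (z : ℤ × ℤ) : Config L :=
  fun i => if ((i.1 : ℤ) + 1, (i.2 : ℤ) + 1) = z then !(σ i) else σ i

/-- The path obtained from `σ` by flipping the spins at a given list of points, one at a time. -/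
def flipSeq (L : ℕ) (σ : Config L) : List (ℤ × ℤ) → List (Config L)
  | [] => [σ]
  | z :: zs => σ :: flipSeq L (flipZ L σ z) zs

/-- The points of `B₋([a:b]×[c:d]) = [a+1:b]×[c+1:d]`, listed in lexicographic (reading) order
if `antilex = false`, and in anti-lexicographic order if `antilex = true`. -/
def gridList (a b c d : ℤ) (antilex : Bool) : List (ℤ × ℤ) :=
  (((List.range (d - c).toNat).map fun t => d - (t : ℤ)).map fun j =>
    ((List.range (b - a).toNat).map fun s =>
      if antilex then ((b - (s : ℤ)), j) else ((a + 1 + (s : ℤ)), j))).flatten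

/-- Case 1 of Definition `DefRectRemovePath`: the corners `(a,c), (a,d), (b,d)` are all defects,
or fewer than three of the four corners are defects. -/
def case1 (L : ℕ) (σ : Config L) (a b c d : ℤ) : Prop :=
  ((a, c) ∈ defects L σ ∧ (a, d) ∈ defects L σ ∧ (b, d) ∈ defects L σ) ∨
  (([(a, c), (a, d), (b, c), (b, d)].filter fun z => decide (z ∈ defects L σ)).length < 3)

/-- Case 2 of Definition `DefRectRemovePath`: `(b,d), (a,d), (b,c)` are defects
but `(a,c)` is not. -/
def case2 (L : ℕ) (σ : Config L) (a b c d : ℤ) : Prop :=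
  (b, d) ∈ defects L σ ∧ (a, d) ∈ defects L σ ∧ (b, c) ∈ defects L σ ∧
    (a, c) ∉ defects L σ

/-- Rectangle-removal path, cases 1 and 2: flip all spins of `B₋([a:b]×[c:d])` in
anti-lexicographic order in case 2, and in lexicographic order otherwise. -/
def rectPathAux (L : ℕ) (σ : Config L) (a b c d : ℤ) : List (Config L) :=
  if case2 L σ a b c d then flipSeq L σ (gridList a b c d true)
  else flipSeq L σ (gridList a b c d false)

/-- The mirror reflection `M(σ)_{i,j} = σ_{i, L+1-j}`. -/
def mirror (L : ℕ) (σ : Config L) : Config L := fun i => σ (i.1, i.2.rev)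

/-- The rectangle-removal path `γ_{σ,R}` of Definition `DefRectRemovePath` for the rectangle
`R = [a:b]×[c:d]` (in plaquette coordinates): in cases 1 or 2 use `rectPathAux`, otherwise
conjugate by the mirror reflection. -/
def rectPath (L : ℕ) (σ : Config L) (a b c d : ℤ) : List (Config L) :=
  if case1 L σ a b c d ∨ case2 L σ a b c d then rectPathAux L σ a b c d
  else (rectPathAux L (mirror L σ) a b ((L : ℤ) - d) ((L : ℤ) - c)).map (mirror L)

/-- A candidate third corner for `R₁`: a defect vertically aligned with `x` or `y`. -/
def VertCand (L : ℕ) (σ : Config L) (x y v : ℤ × ℤ) : Prop :=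
  v ∈ defects L σ ∧ (v.1 = x.1 ∨ v.1 = y.1) ∧ v.2 ≠ x.2

/-- A candidate third corner for `R₂`: a defect horizontally aligned with `x` or `y`. -/
def HorCand (L : ℕ) (σ : Config L) (x y h : ℤ × ℤ) : Prop :=
  h ∈ defects L σ ∧ (h.2 = x.2 ∨ h.2 = y.2) ∧ h.1 ≠ y.1

/-- `[a:b]×[c:d]` is the smallest rectangle with corners `x`, `(y₁,x₂)` and a defect `v`
vertically aligned with `x` or `y` (degenerating to a height-zero rectangle when no such
defect exists). -/
def Rect1 (L : ℕ) (σ : Config L) (x y : ℤ × ℤ) (a b c d : ℤ) : Prop :=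
  (∃ v : ℤ × ℤ, VertCand L σ x y v ∧
      (∀ v' : ℤ × ℤ, VertCand L σ x y v' → |v.2 - x.2| ≤ |v'.2 - x.2|) ∧
      a = min x.1 y.1 ∧ b = max x.1 y.1 ∧ c = min x.2 v.2 ∧ d = max x.2 v.2) ∨
  ((¬ ∃ v : ℤ × ℤ, VertCand L σ x y v) ∧
      a = min x.1 y.1 ∧ b = max x.1 y.1 ∧ c = x.2 ∧ d = x.2)

/-- `[a:b]×[c:d]` is the smallest rectangle with corners `y`, `(y₁,x₂)` and a defect `h`
horizontally aligned with `x` or `y` (degenerating to a width-zero rectangle when no such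
defect exists). -/
def Rect2 (L : ℕ) (σ : Config L) (x y : ℤ × ℤ) (a b c d : ℤ) : Prop :=
  (∃ h : ℤ × ℤ, HorCand L σ x y h ∧
      (∀ h' : ℤ × ℤ, HorCand L σ x y h' → |h.1 - y.1| ≤ |h'.1 - y.1|) ∧
      a = min y.1 h.1 ∧ b = max y.1 h.1 ∧ c = min x.2 y.2 ∧ d = max x.2 y.2) ∨
  ((¬ ∃ h : ℤ × ℤ, HorCand L σ x y h) ∧
      a = y.1 ∧ b = y.1 ∧ c = min x.2 y.2 ∧ d = max x.2 y.2)

/-- `γ` is the mid path `γ(σ) = γ_{σ,R₁} • γ_{η,R₂}` of Definition 4.9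
(Definition `DefNewPath`). -/
def IsMidPath (L : ℕ) (σ : Config L) (γ : List (Config L)) : Prop :=
  ∃ x y : ℤ × ℤ, ∃ a₁ b₁ c₁ d₁ a₂ b₂ c₂ d₂ : ℤ,
    MinPair L σ x y ∧ Rect1 L σ x y a₁ b₁ c₁ d₁ ∧ Rect2 L σ x y a₂ b₂ c₂ d₂ ∧
    γ = rectPath L σ a₁ b₁ c₁ d₁ ++
        (rectPath L ((rectPath L σ a₁ b₁ c₁ d₁).getLastD σ) a₂ b₂ c₂ d₂).tail

end SPM

namespace SPM

theorem length_flipSeq (L : ℕ) (σ : Config L) (l : List (ℤ × ℤ)) :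
    (flipSeq L σ l).length = l.length + 1 := by
  induction l generalizing σ with
  | nil => rfl
  | cons z zs ih => simp [flipSeq, ih]

theorem length_gridList (a b c d : ℤ) (antilex : Bool) :
    (gridList a b c d antilex).length = (d - c).toNat * (b - a).toNat := by
  simp [gridList, List.length_flatten, Function.comp_def]

theorem length_rectPathAux (L : ℕ) (σ : Config L) (a b c d : ℤ) :
    (rectPathAux L σ a b c d).length = (d - c).toNat * (b - a).toNat + 1 := by
  unfold rectPathAux
  split_ifs <;> rw [length_flipSeq, length_gridList]

theorem length_rectPath (L : ℕ) (σ : Config L) (a b c d : ℤ) :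
    (rectPath L σ a b c d).length = (d - c).toNat * (b - a).toNat + 1 := by
  unfold rectPath
  split_ifs
  · exact length_rectPathAux ..
  · rw [List.length_map, length_rectPathAux, sub_sub_sub_cancel_left]

theorem mem_defects_bounds {L : ℕ} {σ : Config L} {x : ℤ × ℤ} (hx : x ∈ defects L σ) :
    (0 ≤ x.1 ∧ x.1 ≤ L) ∧ 0 ≤ x.2 ∧ x.2 ≤ L := by
  simpa [plaqSet] using (Finset.mem_filter.mp hx).1

theorem toNat_max_sub_min (m n : ℤ) : (max m n - min m n).toNat = (m - n).natAbs := by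
  omega

theorem Rect1.area_le {L : ℕ} {σ : Config L} {x y : ℤ × ℤ} {a b c d : ℤ}
    (hx : x ∈ defects L σ) (h : Rect1 L σ x y a b c d) :
    (d - c).toNat * (b - a).toNat ≤ L * (x.1 - y.1).natAbs := by
  obtain ⟨v, hv, -, rfl, rfl, rfl, rfl⟩ | ⟨-, rfl, rfl, rfl, rfl⟩ := h
  · rw [toNat_max_sub_min, toNat_max_sub_min]
    have hx' := mem_defects_bounds hx
    have hv' := mem_defects_bounds hv.1
    exact Nat.mul_le_mul_right _ (by omega)
  · simp

theorem Rect2.area_le {L : ℕ} {σ : Config L} {x y : ℤ × ℤ} {a b c d : ℤ}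
    (hy : y ∈ defects L σ) (h : Rect2 L σ x y a b c d) :
    (d - c).toNat * (b - a).toNat ≤ L * (x.2 - y.2).natAbs := by
  obtain ⟨v, hv, -, rfl, rfl, rfl, rfl⟩ | ⟨-, rfl, rfl, rfl, rfl⟩ := h
  · rw [toNat_max_sub_min, toNat_max_sub_min, mul_comm]
    have hy' := mem_defects_bounds hy
    have hv' := mem_defects_bounds hv.1
    exact Nat.mul_le_mul_right _ (by omega)
  · simp

/-- Points of `ℤ²` lying in the same block of side `s` are at `ℓ¹` distance at most
`2(s-1)`. -/
theorem l1_le_of_ediv_eq {p q : ℤ × ℤ} {s : ℤ} (hs : 0 < s)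
    (h₁ : p.1 / s = q.1 / s) (h₂ : p.2 / s = q.2 / s) : l1 p q ≤ 2 * (s - 1) := by
  have key (m n : ℤ) (h : m / s = n / s) : |m - n| ≤ s - 1 := by
    have hm := Int.mul_ediv_add_emod m s
    have hn := Int.mul_ediv_add_emod n s
    have hm₀ := Int.emod_nonneg m hs.ne'
    have hn₀ := Int.emod_nonneg n hs.ne'
    have hm₁ := Int.emod_lt_of_pos m hs
    have hn₁ := Int.emod_lt_of_pos n hs
    rw [h] at hm
    rw [abs_le]
    constructor <;> linarith
  have := key _ _ h₁
  have := key _ _ h₂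
  unfold l1
  linarith

/-- Packing bound: a subset of `[0:L]²` that is `δ`-separated in `ℓ¹`, with `1 ≤ δ ≤ 2L`,
has at most `16L²/δ²` points. -/
theorem card_mul_sq_le_of_separated {L δ : ℤ} {D : Finset (ℤ × ℤ)}
    (hD : ∀ p ∈ D, (0 ≤ p.1 ∧ p.1 ≤ L) ∧ 0 ≤ p.2 ∧ p.2 ≤ L) (hδ : 1 ≤ δ) (hδL : δ ≤ 2 * L)
    (hsep : ∀ p ∈ D, ∀ q ∈ D, p ≠ q → δ ≤ l1 p q) :
    (D.card : ℤ) * δ ^ 2 ≤ (4 * L) ^ 2 := by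
  obtain ⟨s, hs, hs_lower, hs_upper⟩ : ∃ s : ℤ, 0 < s ∧ δ ≤ 2 * s ∧ 2 * (s - 1) < δ :=
    ⟨(δ + 1) / 2, by omega, by omega, by omega⟩
  have hk : 0 ≤ L / s := Int.ediv_nonneg (by omega) hs.le
  have hcard : D.card ≤ (Finset.Icc 0 (L / s) ×ˢ Finset.Icc 0 (L / s)).card := by
    refine Finset.card_le_card_of_injOn (fun p => (p.1 / s, p.2 / s)) ?_ ?_
    · intro p hp
      obtain ⟨⟨h₁, h₂⟩, h₃, h₄⟩ := hD p hp
      simp only [Finset.coe_product, Finset.coe_Icc, Set.mem_prod, Set.mem_Icc]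
      exact ⟨⟨Int.ediv_nonneg h₁ hs.le, Int.ediv_le_ediv hs h₂⟩,
        Int.ediv_nonneg h₃ hs.le, Int.ediv_le_ediv hs h₄⟩
    · intro p hp q hq hpq
      by_contra hne
      obtain ⟨h₁, h₂⟩ := Prod.mk.inj hpq
      exact absurd (hsep p hp q hq hne) (by linarith [l1_le_of_ediv_eq hs h₁ h₂])
  have hcard' : (D.card : ℤ) ≤ (L / s + 1) ^ 2 := by
    rw [Finset.card_product, Int.card_Icc, sub_zero] at hcard
    calc (D.card : ℤ) ≤ ((L / s + 1).toNat * (L / s + 1).toNat : ℕ) := by exact_mod_cast hcard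
      _ = (L / s + 1) ^ 2 := by
        rw [Nat.cast_mul, Int.toNat_of_nonneg (by omega), sq]
  have hside : (L / s + 1) * (2 * s) ≤ 4 * L := by
    linarith [Int.ediv_mul_le L hs.ne', show s ≤ L by omega]
  calc (D.card : ℤ) * δ ^ 2 ≤ (L / s + 1) ^ 2 * (2 * s) ^ 2 := by gcongr
    _ = ((L / s + 1) * (2 * s)) ^ 2 := by ring
    _ ≤ (4 * L) ^ 2 := by gcongr

theorem MinPair.card_mul_sq_le {L : ℕ} {σ : Config L} {x y : ℤ × ℤ} (h : MinPair L σ x y) :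
    ((defects L σ).card : ℤ) * l1 x y ^ 2 ≤ (4 * L) ^ 2 := by
  obtain ⟨hx, hy, hne, -, hmin, -⟩ := h
  have hx' := mem_defects_bounds hx
  have hy' := mem_defects_bounds hy
  refine card_mul_sq_le_of_separated (fun p => mem_defects_bounds) ?_ ?_ hmin
  · by_contra hlt
    rw [l1, Int.abs_eq_natAbs, Int.abs_eq_natAbs] at hlt
    exact hne (Prod.ext (by omega) (by omega))
  · rw [l1, Int.abs_eq_natAbs, Int.abs_eq_natAbs]
    omega

theorem IsMidPath.exists_length_le {L : ℕ} {σ : Config L} {γ : List (Config L)}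
    (h : IsMidPath L σ γ) :
    ∃ x y, MinPair L σ x y ∧ (γ.length : ℤ) - 1 ≤ L * l1 x y := by
  obtain ⟨x, y, a₁, b₁, c₁, d₁, a₂, b₂, c₂, d₂, hxy, h₁, h₂, rfl⟩ := h
  refine ⟨x, y, hxy, ?_⟩
  have area₁ := h₁.area_le hxy.1
  have area₂ := h₂.area_le hxy.2.1
  zify at area₁ area₂
  rw [List.length_append, List.length_tail, length_rectPath, length_rectPath, l1, mul_add]
  push_cast [Nat.add_sub_cancel]
  linarith

end SPM

open SPM

/-- Lemma `LemmaPathLength`, path length for mid paths: for any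
configuration `σ` with at least two defects, the mid path `γ(σ)` has length at most
`6L²/√|D(σ)|`. -/
theorem mid_path_length (L : ℕ) (σ : Config L) (hσ : 2 ≤ (defects L σ).card)
    (γ : List (Config L)) (hγ : IsMidPath L σ γ) :
    (γ.length : ℝ) - 1 ≤ 6 * (L : ℝ) ^ 2 / Real.sqrt ((defects L σ).card : ℝ) := by
  obtain ⟨x, y, hxy, hlen⟩ := hγ.exists_length_le
  have hlen' : (γ.length : ℝ) - 1 ≤ L * l1 x y := by exact_mod_cast hlen
  have hpack : ((defects L σ).card : ℝ) * (l1 x y : ℝ) ^ 2 ≤ (4 * L) ^ 2 := by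
    exact_mod_cast hxy.card_mul_sq_le
  have hcard : (0 : ℝ) < (defects L σ).card := by
    exact_mod_cast (by omega : 0 < (defects L σ).card)
  rw [le_div_iff₀ (Real.sqrt_pos.mpr hcard)]
  have hroot : (l1 x y : ℝ) * √((defects L σ).card : ℝ) ≤ 4 * L := by
    refine abs_le_of_sq_le_sq' ?_ (by positivity) |>.2
    rwa [mul_pow, Real.sq_sqrt hcard.le, mul_comm]
  calc ((γ.length : ℝ) - 1) * √((defects L σ).card : ℝ)
      ≤ L * l1 x y * √((defects L σ).card : ℝ) := by gcongr
    _ = L * (l1 x y * √((defects L σ).card : ℝ)) := by ring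
    _ ≤ L * (4 * L) := by gcongr
    _ ≤ 6 * (L : ℝ) ^ 2 := by linarith [sq_nonneg (L : ℝ)]

end
end

section
/- Energy bound for mid paths: for Λ=[1:L]² with all-plus boundary conditions, any configuration σ∈{-1,+1}^Λ with at least two defects, and any edge e=(e₋,e₊) of the mid path γ(σ) (a consecutive pair of configurations in the path), one has π(σ)/(π(e₋)·𝓛(e₋,e₊)) ≤ e^{52β}, where 𝓛(e₋,e₊)=min(1,e^{-β(H(e₊)-H(e₋))}) is the Metropolis rate of the spin flip from e₋ to e₊. -/
open scoped BigOperators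

attribute [local instance] Classical.propDecidable

noncomputable section

namespace SPM

/-- Flip all spins in the rectangle `[a:b]×[c:d]`. -/
def flipRect (L : ℕ) (σ : Config L) (a b c d : ℤ) : Config L := fun i =>
  if (a ≤ (i.1 : ℤ) + 1 ∧ (i.1 : ℤ) + 1 ≤ b) ∧ (c ≤ (i.2 : ℤ) + 1 ∧ (i.2 : ℤ) + 1 ≤ d)
  then !(σ i) else σ i

/-- The sign `-1` on the rectangle `[a:b]×[c:d]` and `1` elsewhere. -/
def rectSign (a b c d : ℤ) (y : ℤ × ℤ) : ℝ :=
  if (a ≤ y.1 ∧ y.1 ≤ b) ∧ (c ≤ y.2 ∧ y.2 ≤ d) then -1 else 1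

theorem spinAt_site (L : ℕ) (σ : Config L) (i : Fin L × Fin L) :
    spinAt L σ ((i.1 : ℤ) + 1, (i.2 : ℤ) + 1) = if σ i = false then -1 else 1 := by
  unfold spinAt
  congr 1
  apply propext
  constructor
  · rintro ⟨j, hj, h⟩
    have : j = i := by
      simp only [Prod.mk.injEq] at hj
      ext <;> omega
    exact this ▸ h
  · exact fun h => ⟨i, rfl, h⟩

theorem spinAt_of_forall_ne (L : ℕ) (σ : Config L) (y : ℤ × ℤ)
    (hy : ∀ i : Fin L × Fin L, ((i.1 : ℤ) + 1, (i.2 : ℤ) + 1) ≠ y) : spinAt L σ y = 1 := by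
  unfold spinAt
  rw [if_neg]
  rintro ⟨i, hi, -⟩
  exact hy i hi

theorem spinAt_flipRect (L : ℕ) (σ : Config L) (a b c d : ℤ) (y : ℤ × ℤ) :
    spinAt L (flipRect L σ a b c d) y =
      spinAt L σ y * rectSign (max a 1) (min b L) (max c 1) (min d L) y := by
  by_cases hy : ∃ i : Fin L × Fin L, ((i.1 : ℤ) + 1, (i.2 : ℤ) + 1) = y
  · obtain ⟨i, rfl⟩ := hy
    rw [spinAt_site, spinAt_site]
    unfold flipRect rectSign
    have h₁ := i.1.2
    have h₂ := i.2.2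
    have e : ((max a 1 ≤ (i.1 : ℤ) + 1 ∧ (i.1 : ℤ) + 1 ≤ min b L) ∧
        (max c 1 ≤ (i.2 : ℤ) + 1 ∧ (i.2 : ℤ) + 1 ≤ min d L)) ↔
        ((a ≤ (i.1 : ℤ) + 1 ∧ (i.1 : ℤ) + 1 ≤ b) ∧
        (c ≤ (i.2 : ℤ) + 1 ∧ (i.2 : ℤ) + 1 ≤ d)) := by omega
    simp only [e]
    cases σ i <;> split_ifs <;> simp_all
  · push Not at hy
    rw [spinAt_of_forall_ne L _ y hy, spinAt_of_forall_ne L _ y hy, rectSign, if_neg, mul_one]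
    rintro ⟨⟨h₁, h₂⟩, h₃, h₄⟩
    refine hy (⟨(y.1 - 1).toNat, by omega⟩, ⟨(y.2 - 1).toNat, by omega⟩) ?_
    ext <;> simp only <;> omega

theorem rectSign_plaq_eq_one (a b c d : ℤ) (x : ℤ × ℤ)
    (hx : x ∉ ({a - 1, b} : Finset ℤ) ×ˢ ({c - 1, d} : Finset ℤ)) :
    rectSign a b c d x * rectSign a b c d (x.1 + 1, x.2) * rectSign a b c d (x.1, x.2 + 1) *
      rectSign a b c d (x.1 + 1, x.2 + 1) = 1 := by
  simp only [Finset.mem_product, Finset.mem_insert, Finset.mem_singleton, not_and_or] at hx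
  unfold rectSign
  simp only
  rcases hx with hx | hx
  · have e : (a ≤ x.1 + 1 ∧ x.1 + 1 ≤ b) ↔ (a ≤ x.1 ∧ x.1 ≤ b) := by omega
    simp only [e]
    split_ifs <;> norm_num
  · have e : (c ≤ x.2 + 1 ∧ x.2 + 1 ≤ d) ↔ (c ≤ x.2 ∧ x.2 ≤ d) := by omega
    simp only [e]
    split_ifs <;> norm_num

theorem abs_spinAt (L : ℕ) (σ : Config L) (y : ℤ × ℤ) : |spinAt L σ y| = 1 := by
  unfold spinAt
  split_ifs <;> simp

theorem abs_plaq (L : ℕ) (σ : Config L) (x : ℤ × ℤ) : |plaq L σ x| = 1 := by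
  simp [plaq, abs_mul, abs_spinAt]

/-- Flipping a rectangle only affects the plaquettes at its four corners. -/
theorem ham_flipRect_le (L : ℕ) (σ : Config L) (a b c d : ℤ) :
    ham L (flipRect L σ a b c d) ≤ ham L σ + 4 := by
  set T : Finset (ℤ × ℤ) := ({max a 1 - 1, min b (L : ℤ)} : Finset ℤ) ×ˢ
    ({max c 1 - 1, min d (L : ℤ)} : Finset ℤ) with hT
  have hcard : (T.card : ℝ) ≤ 4 := by
    have : T.card ≤ 2 * 2 := by
      rw [hT, Finset.card_product]
      exact Nat.mul_le_mul Finset.card_le_two Finset.card_le_two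
    exact_mod_cast this
  have key : ∀ x, plaq L σ x - plaq L (flipRect L σ a b c d) x ≤ if x ∈ T then 2 else 0 := by
    intro x
    split_ifs with hx
    · have h₁ := abs_le.1 (abs_plaq L σ x).le
      have h₂ := abs_le.1 (abs_plaq L (flipRect L σ a b c d) x).le
      linarith
    · have h := rectSign_plaq_eq_one _ _ _ _ x hx
      have : plaq L (flipRect L σ a b c d) x = plaq L σ x * 1 := by
        rw [← h]
        simp only [plaq, spinAt_flipRect]
        ring
      rw [this]
      linarith
  have hsum : ∑ x ∈ plaqSet L, (plaq L σ x - plaq L (flipRect L σ a b c d) x) ≤ 8 := by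
    refine (Finset.sum_le_sum fun x _ => key x).trans ?_
    rw [← Finset.sum_filter, Finset.sum_const, nsmul_eq_mul]
    have : ((((plaqSet L).filter (· ∈ T)).card : ℕ) : ℝ) ≤ T.card := by
      exact_mod_cast Finset.card_le_card fun x hx => (Finset.mem_filter.1 hx).2
    linarith
  rw [Finset.sum_sub_distrib] at hsum
  unfold ham
  linarith

theorem flipRect_empty (L : ℕ) (σ : Config L) (a b c d : ℤ) (h : b < a ∨ d < c) :
    flipRect L σ a b c d = σ := by
  funext i
  unfold flipRect
  rw [if_neg (by omega)]

theorem mirror_mirror (L : ℕ) (σ : Config L) : mirror L (mirror L σ) = σ := by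
  funext i
  simp [mirror]

theorem mirror_flipRect (L : ℕ) (σ : Config L) (a b c d : ℤ) :
    mirror L (flipRect L σ a b c d) = flipRect L (mirror L σ) a b (L + 1 - d) (L + 1 - c) := by
  funext i
  have h := i.2.2
  simp only [mirror, flipRect, Fin.val_rev]
  congr 1
  apply propext
  omega

theorem mem_flipSeq {L : ℕ} {η σ : Config L} {l : List (ℤ × ℤ)} (h : η ∈ flipSeq L σ l) :
    ∃ k, η = (l.take k).foldl (flipZ L) σ := by
  induction l generalizing σ with
  | nil => exact ⟨0, by simpa [flipSeq] using h⟩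
  | cons z zs ih =>
    rcases List.mem_cons.1 h with rfl | h
    · exact ⟨0, rfl⟩
    · obtain ⟨k, hk⟩ := ih h
      exact ⟨k + 1, by simpa using hk⟩

theorem take_flatten_map_range {α : Type*} (f : ℕ → List α) (m k : ℕ) :
    ∃ m' k', (((List.range m).map f).flatten).take k =
      ((List.range m').map f).flatten ++ (f m').take k' := by
  induction m with
  | zero => exact ⟨0, 0, by simp⟩
  | succ m ih =>
    rw [List.range_succ, List.map_append, List.flatten_append, List.take_append]
    rcases le_total k (((List.range m).map f).flatten).length with h | h
    · rw [Nat.sub_eq_zero_of_le h, List.take_zero, List.append_nil]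
      exact ih
    · exact ⟨m, k - (((List.range m).map f).flatten).length, by
        rw [List.take_of_length_le h]; simp⟩

/-- A row of `gridList` of length `n`. -/
def gridRow (a b : ℤ) (antilex : Bool) (j : ℤ) (n : ℕ) : List (ℤ × ℤ) :=
  (List.range n).map fun s : ℕ => if antilex then ((b - (s : ℤ)), j) else ((a + 1 + (s : ℤ)), j)

theorem foldl_gridRow (L : ℕ) (σ : Config L) (a b : ℤ) (antilex : Bool) (j : ℤ) (n : ℕ) :
    (gridRow a b antilex j n).foldl (flipZ L) σ =
      flipRect L σ (if antilex then b - n + 1 else a + 1) (if antilex then b else a + n) j j := by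
  induction n with
  | zero => rw [flipRect_empty _ _ _ _ _ _ (by cases antilex <;> simp)]; rfl
  | succ n ih =>
    unfold gridRow at ih ⊢
    rw [List.range_succ, List.map_append, List.foldl_append, ih]
    funext i
    cases antilex <;>
      simp only [List.map_cons, List.map_nil, List.foldl_cons, List.foldl_nil, flipZ, flipRect,
        Prod.mk.injEq, Bool.false_eq_true, if_true, if_false] <;>
      split_ifs <;> first | rfl | (simp; done) | (exfalso; omega)

theorem foldl_flatten_gridRow (L : ℕ) (σ : Config L) (a b d : ℤ) (antilex : Bool) (n m : ℕ) :
    (((List.range m).map fun t : ℕ => gridRow a b antilex (d - t) n).flatten).foldl (flipZ L) σ =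
      flipRect L σ (if antilex then b - n + 1 else a + 1) (if antilex then b else a + n)
        (d - m + 1) d := by
  induction m with
  | zero => rw [flipRect_empty _ _ _ _ _ _ (by simp)]; rfl
  | succ m ih =>
    rw [List.range_succ, List.map_append, List.flatten_append, List.foldl_append, ih]
    simp only [List.map_cons, List.map_nil, List.flatten_cons, List.flatten_nil, List.append_nil,
      foldl_gridRow]
    funext i
    simp only [flipRect]
    split_ifs <;> first | rfl | (simp; done) | (exfalso; push_cast at *; omega)

theorem gridRow_take (a b : ℤ) (antilex : Bool) (j : ℤ) (n k : ℕ) :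
    (gridRow a b antilex j n).take k = gridRow a b antilex j (min k n) := by
  rw [gridRow, gridRow, ← List.map_take, List.take_range]

/-- `η` is obtained from `σ` by flipping two rectangles. -/
def TwoRectFlip (L : ℕ) (σ η : Config L) : Prop :=
  ∃ a b c d a' b' c' d' : ℤ, η = flipRect L (flipRect L σ a b c d) a' b' c' d'

theorem TwoRectFlip.mirror {L : ℕ} {σ η : Config L} (h : TwoRectFlip L (SPM.mirror L σ) η) :
    TwoRectFlip L σ (SPM.mirror L η) := by
  obtain ⟨a, b, c, d, a', b', c', d', rfl⟩ := h
  refine ⟨a, b, L + 1 - d, L + 1 - c, a', b', L + 1 - d', L + 1 - c', ?_⟩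
  rw [mirror_flipRect, mirror_flipRect, mirror_mirror]

theorem TwoRectFlip.ham_le {L : ℕ} {σ η : Config L} (h : TwoRectFlip L σ η) :
    ham L η ≤ ham L σ + 8 := by
  obtain ⟨a, b, c, d, a', b', c', d', rfl⟩ := h
  have h₁ := ham_flipRect_le L σ a b c d
  have h₂ := ham_flipRect_le L (flipRect L σ a b c d) a' b' c' d'
  linarith

/-- Configurations met while flipping a grid row by row differ from the starting point by the
rectangle of completed rows and the started part of the current row. -/
theorem twoRectFlip_of_mem_flipSeq {L : ℕ} {σ η : Config L} {a b c d : ℤ} {antilex : Bool}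
    (h : η ∈ flipSeq L σ (gridList a b c d antilex)) : TwoRectFlip L σ η := by
  obtain ⟨k, rfl⟩ := mem_flipSeq h
  have hgrid : gridList a b c d antilex = ((List.range (d - c).toNat).map
      fun t : ℕ => gridRow a b antilex (d - t) (b - a).toNat).flatten := by
    simp only [gridList, bind_pure_comp, List.map_eq_map, List.map_map]
    rfl
  obtain ⟨m', k', hk⟩ := take_flatten_map_range
    (fun t : ℕ => gridRow a b antilex (d - t) (b - a).toNat) (d - c).toNat k
  rw [hgrid, hk, List.foldl_append, foldl_flatten_gridRow, gridRow_take, foldl_gridRow]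
  exact ⟨_, _, _, _, _, _, _, _, rfl⟩

theorem twoRectFlip_of_mem_rectPathAux {L : ℕ} {σ η : Config L} {a b c d : ℤ}
    (h : η ∈ rectPathAux L σ a b c d) : TwoRectFlip L σ η := by
  unfold rectPathAux at h
  split_ifs at h <;> exact twoRectFlip_of_mem_flipSeq h

theorem twoRectFlip_of_mem_rectPath {L : ℕ} {σ η : Config L} {a b c d : ℤ}
    (h : η ∈ rectPath L σ a b c d) : TwoRectFlip L σ η := by
  unfold rectPath at h
  split_ifs at h
  · exact twoRectFlip_of_mem_rectPathAux h
  · obtain ⟨ζ, hζ, rfl⟩ := List.mem_map.1 h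
    exact (twoRectFlip_of_mem_rectPathAux hζ).mirror

theorem ham_le_of_mem_midPath {L : ℕ} {σ η : Config L} {γ : List (Config L)}
    (hγ : IsMidPath L σ γ) (h : η ∈ γ) : ham L η ≤ ham L σ + 16 := by
  obtain ⟨x, y, a₁, b₁, c₁, d₁, a₂, b₂, c₂, d₂, -, -, -, rfl⟩ := hγ
  rcases List.mem_append.1 h with h | h
  · have := (twoRectFlip_of_mem_rectPath h).ham_le
    linarith
  · have h₂ := (twoRectFlip_of_mem_rectPath (List.mem_of_mem_tail h)).ham_le
    have h₁ : ham L ((rectPath L σ a₁ b₁ c₁ d₁).getLastD σ) ≤ ham L σ + 8 := by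
      rcases hp : rectPath L σ a₁ b₁ c₁ d₁ with _ | ⟨ζ, l⟩
      · simp
      · refine (twoRectFlip_of_mem_rectPath (a := a₁) (b := b₁) (c := c₁) (d := d₁) ?_).ham_le
        rw [hp, List.getLastD_cons, List.getLastD_eq_getLast?]
        rcases hl : l.getLast? with _ | w
        · simp
        · exact List.mem_cons_of_mem _ (List.mem_of_getLast? hl)
    linarith

theorem gibbs_div_le {L : ℕ} {β C : ℝ} (hβ : 0 < β) {σ η ζ : Config L}
    (hη : ham L η ≤ ham L σ + C) (hζ : ham L ζ ≤ ham L σ + C) :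
    gibbs L β σ / (gibbs L β η * metroRate L β η ζ) ≤ Real.exp (C * β) := by
  have hZ : 0 < ∑ ξ : Config L, Real.exp (-β * ham L ξ) :=
    Finset.sum_pos (fun _ _ => Real.exp_pos _) ⟨σ, Finset.mem_univ _⟩
  have hr : 0 < metroRate L β η ζ := lt_min one_pos (Real.exp_pos _)
  have hg : 0 < gibbs L β η := div_pos (Real.exp_pos _) hZ
  have key : Real.exp (-β * ham L σ) ≤
      Real.exp (C * β) * (Real.exp (-β * ham L η) * metroRate L β η ζ) := by
    unfold metroRate
    rcases min_choice 1 (Real.exp (-β * (ham L ζ - ham L η))) with h | h <;> rw [h]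
    · rw [mul_one, ← Real.exp_add, Real.exp_le_exp]
      nlinarith
    · rw [← Real.exp_add, ← Real.exp_add, Real.exp_le_exp]
      nlinarith
  rw [div_le_iff₀ (mul_pos hg hr)]
  unfold gibbs
  calc _ ≤ _ := div_le_div_of_nonneg_right key hZ.le
    _ = _ := by ring

end SPM

open SPM

/-- Lemma `LemmaNRGSmallRegRem`, energy bound for mid paths: for any
configuration `σ` with at least two defects and any edge `e = (e₋, e₊)` of the mid path
`γ(σ)`, one has `π(σ)/(π(e₋) 𝓛(e₋,e₊)) ≤ e^{52β}`. -/
theorem mid_path_energy (L : ℕ) (β : ℝ) (hβ : 0 < β) (σ : Config L)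
    (hσ : 2 ≤ (defects L σ).card) (γ : List (Config L)) (hγ : IsMidPath L σ γ)
    (e : Config L × Config L) (he : e ∈ γ.zip γ.tail) :
    gibbs L β σ / (gibbs L β e.1 * metroRate L β e.1 e.2) ≤ Real.exp (52 * β) := by
  obtain ⟨h₁, h₂⟩ := List.of_mem_zip he
  have h₁' := ham_le_of_mem_midPath hγ h₁
  have h₂' := ham_le_of_mem_midPath hγ (List.mem_of_mem_tail h₂)
  exact gibbs_div_le hβ (by linarith) (by linarith)

end
end

section
/- Structure of periodic ground states: for the square plaquette model on the L×L torus with periodic boundary conditions, the set 𝒢 of ground states (configurations with no defects, equivalently the minimizers of H^per) is exactly the image of the injective map w⁻¹:{-1,+1}^{2L-1}→{-1,+1}^{[1:L]²} defined by w⁻¹(v)[i,j]=v[i]·v[L+j] for i∈[1:L], j∈[1:L-1], and w⁻¹(v)[i,L]=v[i] for i∈[1:L]. Consequently |𝒢|=2^{2L-1}, and the ground states are precisely the configurations obtained from the all-plus configuration by flipping all spins in an arbitrary set of rows and columns. -/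
open scoped BigOperators

attribute [local instance] Classical.propDecidable

noncomputable section

namespace SPMP

/-- The inverse `w⁻¹ : {-1,+1}^{2L-1} → 𝒢` of the ground-state bijection
(Definition `DefBijectionPeriodic`): `w⁻¹(v)[i,j] = v[i]·v[L+j]` for `j ∈ [1:L-1]` and
`w⁻¹(v)[i,L] = v[i]` (sites are indexed zero-based here). -/
def wInv (L : ℕ) (v : Fin (2 * L - 1) → Bool) : ConfigP L :=
  fun z =>
    if h : z.2.val = L - 1 then
      v ⟨z.1.val, by have h1 := z.1.isLt; omega⟩
    else
      v ⟨z.1.val, by have h1 := z.1.isLt; omega⟩ ==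
        v ⟨L + z.2.val, by have h2 := z.2.isLt; omega⟩

end SPMP

namespace SPMP

theorem plaqP_le_one {L : ℕ} (σ : ConfigP L) (x : Fin L × Fin L) : plaqP L σ x ≤ 1 := by
  unfold plaqP sval
  split_ifs <;> norm_num

theorem plaqP_eq_one_iff {L : ℕ} (σ : ConfigP L) (x : Fin L × Fin L) :
    plaqP L σ x = 1 ↔
      (σ x == σ (fsucc x.1, x.2)) = (σ (x.1, fsucc x.2) == σ (fsucc x.1, fsucc x.2)) := by
  unfold plaqP sval
  cases σ x <;> cases σ (fsucc x.1, x.2) <;> cases σ (x.1, fsucc x.2) <;>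
    cases σ (fsucc x.1, fsucc x.2) <;> norm_num

/-- A function on `Fin L` invariant under the cyclic successor is constant. -/
theorem eq_of_fsucc_invariant {L : ℕ} {α : Type*} {f : Fin L → α}
    (hf : ∀ i, f (fsucc i) = f i) (i j : Fin L) : f i = f j := by
  have hzero : ∀ (n : ℕ) (hn : n < L), f ⟨n, hn⟩ = f ⟨0, by omega⟩ := by
    intro n
    induction n with
    | zero => intro _; rfl
    | succ n ih =>
      intro hn
      rw [← ih (by omega), ← hf ⟨n, by omega⟩]
      congr 1
      exact Fin.ext (Nat.mod_eq_of_lt hn).symm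
  exact (hzero i i.isLt).trans (hzero j j.isLt).symm

/-- Without defects, the product of the four spins at the corners of any rectangle is `+1`. -/
theorem rectangle_of_plaqP_eq_one {L : ℕ} {σ : ConfigP L} (h : ∀ x, plaqP L σ x = 1)
    (i i' j j' : Fin L) : (σ (i, j) == σ (i, j')) = (σ (i', j) == σ (i', j')) := by
  have hrow : ∀ i j j', (σ (i, j) == σ (fsucc i, j)) = (σ (i, j') == σ (fsucc i, j')) :=
    fun i => eq_of_fsucc_invariant (f := fun j => (σ (i, j) == σ (fsucc i, j)))
      fun j => ((plaqP_eq_one_iff σ (i, j)).1 (h (i, j))).symm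
  refine eq_of_fsucc_invariant (f := fun i => (σ (i, j) == σ (i, j'))) (fun i => ?_) i i'
  have := hrow i j j'
  revert this
  cases σ (i, j) <;> cases σ (fsucc i, j) <;> cases σ (i, j') <;> cases σ (fsucc i, j') <;> simp

theorem groundP_eq_setOf_plaqP_eq_one (L : ℕ) :
    GroundP L = {σ : ConfigP L | ∀ x : Fin L × Fin L, plaqP L σ x = 1} := by
  ext σ
  constructor
  · intro h
    have hplus : ∀ x, plaqP L (fun _ => true) x = 1 := by
      intro x
      simp [plaqP, sval]
    have hle := h fun _ => true
    unfold hamP at hle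
    simp only [hplus] at hle
    have hsum : ∑ x, plaqP L σ x = ∑ _x : Fin L × Fin L, (1 : ℝ) :=
      le_antisymm (Finset.sum_le_sum fun x _ => plaqP_le_one σ x) (by linarith)
    intro x
    exact (Finset.sum_eq_sum_iff_of_le fun x _ => plaqP_le_one σ x).1 hsum x (Finset.mem_univ x)
  · intro h η
    have hsum : ∑ x, plaqP L η x ≤ ∑ x, plaqP L σ x :=
      Finset.sum_le_sum fun x _ => (plaqP_le_one η x).trans_eq (h x).symm
    unfold hamP
    linarith

theorem wInv_injective {L : ℕ} (hL : 1 ≤ L) : Function.Injective (wInv L) := by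
  intro v v' h
  have hfst : ∀ (i : ℕ) (hi : i < L), v ⟨i, by omega⟩ = v' ⟨i, by omega⟩ := by
    intro i hi
    have := congrFun h (⟨i, hi⟩, ⟨L - 1, by omega⟩)
    simpa [wInv] using this
  funext ⟨k, hk⟩
  by_cases hkL : k < L
  · exact hfst k hkL
  · obtain ⟨j, rfl⟩ := Nat.exists_eq_add_of_le (not_lt.1 hkL)
    have := congrFun h (⟨0, hL⟩, ⟨j, by omega⟩)
    have hj : j ≠ L - 1 := by omega
    simp only [wInv, hj, dite_false, hfst 0 hL] at this
    revert this
    cases v' ⟨0, by omega⟩ <;> cases v ⟨L + j, hk⟩ <;> cases v' ⟨L + j, hk⟩ <;> simp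

theorem mem_range_wInv_of_plaqP_eq_one {L : ℕ} (hL : 1 ≤ L) {σ : ConfigP L}
    (h : ∀ x, plaqP L σ x = 1) : σ ∈ Set.range (wInv L) := by
  let last : Fin L := ⟨L - 1, by omega⟩
  let zero : Fin L := ⟨0, hL⟩
  refine ⟨fun k => if hk : k.val < L then σ (⟨k.val, hk⟩, last)
    else (σ (zero, last) == σ (zero, ⟨k.val - L, by omega⟩)), ?_⟩
  funext ⟨i, j⟩
  by_cases hj : j.val = L - 1
  · have : j = last := Fin.ext hj
    subst this
    simp [wInv, last]
  · have := rectangle_of_plaqP_eq_one h i zero last j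
    simp only [wInv, hj, dite_false, i.isLt, dite_true, Fin.eta, Nat.not_lt.2 (Nat.le_add_right _ _),
      Nat.add_sub_cancel_left]
    rw [← this]
    cases σ (i, last) <;> cases σ (i, j) <;> rfl

theorem exists_flip_eq_wInv {L : ℕ} (v : Fin (2 * L - 1) → Bool) :
    ∃ A B : Finset (Fin L),
      wInv L v = fun z => (decide (z.2 ∈ A) == decide (z.1 ∈ B)) := by
  refine ⟨Finset.univ.filter fun j => ∀ hj : j.val ≠ L - 1, v ⟨L + j.val, by omega⟩ = true,
    Finset.univ.filter fun i => v ⟨i.val, by omega⟩ = true, ?_⟩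
  funext ⟨i, j⟩
  by_cases hj : j.val = L - 1
  · simp [wInv, hj]
  · simp [wInv, hj, Bool.beq_comm]

theorem plaqP_flip_eq_one {L : ℕ} (A B : Finset (Fin L)) (x : Fin L × Fin L) :
    plaqP L (fun z => (decide (z.2 ∈ A) == decide (z.1 ∈ B))) x = 1 := by
  rw [plaqP_eq_one_iff]
  dsimp only
  cases decide (x.2 ∈ A) <;> cases decide (x.1 ∈ B) <;> cases decide (fsucc x.2 ∈ A) <;>
    cases decide (fsucc x.1 ∈ B) <;> rfl

end SPMP

open SPMP

/-- structure of periodic ground states: the ground states of the periodic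
square plaquette model are exactly the configurations with no defects, the image of the
injective map `w⁻¹`, the configurations obtained from all-plus by flipping an arbitrary set
of rows and columns, and there are `2^{2L-1}` of them. -/
theorem periodic_ground_state_structure (L : ℕ) (hL : 1 ≤ L) :
    GroundP L = {σ : ConfigP L | ∀ x : Fin L × Fin L, plaqP L σ x = 1} ∧
    Function.Injective (wInv L) ∧
    GroundP L = Set.range (wInv L) ∧
    (GroundP L).ncard = 2 ^ (2 * L - 1) ∧
    GroundP L = {σ : ConfigP L | ∃ A B : Finset (Fin L),
      σ = fun z => (decide (z.2 ∈ A) == decide (z.1 ∈ B))} := by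
  have hdef := groundP_eq_setOf_plaqP_eq_one L
  have hinj := wInv_injective hL
  have hrange : GroundP L = Set.range (wInv L) := by
    rw [hdef]
    refine Set.Subset.antisymm (fun σ h => mem_range_wInv_of_plaqP_eq_one hL h) ?_
    rintro _ ⟨v, rfl⟩ x
    obtain ⟨A, B, hAB⟩ := exists_flip_eq_wInv v
    rw [hAB]
    exact plaqP_flip_eq_one A B x
  refine ⟨hdef, hinj, hrange, ?_, Set.Subset.antisymm ?_ ?_⟩
  · rw [hrange, ← Set.image_univ, Set.ncard_image_of_injective _ hinj, Set.ncard_univ]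
    simp
  · rw [hrange]
    rintro _ ⟨v, rfl⟩
    exact exists_flip_eq_wInv v
  · rintro _ ⟨A, B, rfl⟩
    rw [hdef]
    exact plaqP_flip_eq_one A B

end
end
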